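/- arXiv:2103.07174 — 2 statements merged into one kernel-verified Lean document; each statement's English description precedes it below -/
import Mathlib

section
/- Let a,b,S>0. The system of equations in positive reals t,s>0 given by t − aS(t+s)^{1/3} = 0 and s − bS²(t+s)^{2/3} = 0 has a unique solution (t₀,s₀); explicitly t₀ = (abS³ + a√(b²S⁶ + 4aS³))/2 and s₀ = abS³ + (b³S⁶ + b²S³√(b²S⁶ + 4aS³))/2. Moreover, if t,s>0 satisfy t − aS(t+s)^{1/3} ≥ 0 and s − bS²(t+s)^{2/3} ≥ 0, then t ≥ t₀ and s ≥ s₀. -/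
open Real

noncomputable section

/-! Put `x = (t + s)^{1/3}`, `α = aS` and `β = bS²`. Adding `t ≥ αx` and `s ≥ βx²` gives
`x³ ≥ αx + βx²`, that is, `x² ≥ α + βx`, so `x` is at least the larger root `y` of
`x² = α + βx`, with equality when both inequalities are equalities. Hence `t ≥ αx ≥ αy` and
`s ≥ βx² ≥ βy²`, and `(αy, βy²)` solves the system because `αy + βy² = y³`. -/

section UpperRoot

variable {α β x : ℝ}

/-- The larger root of the quadratic equation `x ^ 2 = α + β * x`, real when `0 ≤ β ^ 2 + 4 * α`.
It is the value of `(t + s)^{1/3}` at the solution of the system with coefficients `α` and `β`. -/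
def upperRoot (α β : ℝ) : ℝ := (β + √(β ^ 2 + 4 * α)) / 2

theorem upperRoot_sq (h : 0 ≤ β ^ 2 + 4 * α) :
    upperRoot α β ^ 2 = α + β * upperRoot α β := by
  unfold upperRoot
  linear_combination (1 / 4) * Real.sq_sqrt h

theorem upperRoot_cube (h : 0 ≤ β ^ 2 + 4 * α) :
    upperRoot α β ^ 3 = α * upperRoot α β + β * upperRoot α β ^ 2 := by
  linear_combination upperRoot α β * upperRoot_sq h

theorem upperRoot_pos (hα : 0 < α) : 0 < upperRoot α β := by
  have : |β| < √(β ^ 2 + 4 * α) := Real.lt_sqrt_of_sq_lt (by rw [sq_abs]; linarith)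
  unfold upperRoot
  linarith [neg_abs_le β]

theorem abs_le_two_mul_upperRoot_sub (hα : 0 ≤ α) : |β| ≤ 2 * upperRoot α β - β := by
  have : |β| ≤ √(β ^ 2 + 4 * α) := Real.abs_le_sqrt (by linarith)
  unfold upperRoot
  linarith

theorem upperRoot_nonneg (hα : 0 ≤ α) : 0 ≤ upperRoot α β := by
  linarith [abs_le_two_mul_upperRoot_sub (β := β) hα, neg_abs_le β]

theorem le_upperRoot (hα : 0 ≤ α) : β ≤ upperRoot α β := by
  linarith [abs_le_two_mul_upperRoot_sub (β := β) hα, le_abs_self β]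

theorem sq_sub_eq_mul_sub_upperRoot (h : 0 ≤ β ^ 2 + 4 * α) (x : ℝ) :
    x ^ 2 - (α + β * x) = (x + (upperRoot α β - β)) * (x - upperRoot α β) := by
  linear_combination upperRoot_sq h

theorem upperRoot_le_iff (hα : 0 ≤ α) (hx : 0 < x) :
    upperRoot α β ≤ x ↔ α + β * x ≤ x ^ 2 := by
  have hpos : 0 < x + (upperRoot α β - β) := by linarith [le_upperRoot (β := β) hα]
  rw [← sub_nonneg (b := α + β * x), sq_sub_eq_mul_sub_upperRoot (by positivity),
    mul_nonneg_iff_of_pos_left hpos, sub_nonneg]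

theorem eq_upperRoot_iff (hα : 0 ≤ α) (hx : 0 < x) :
    x = upperRoot α β ↔ x ^ 2 = α + β * x := by
  have hpos : 0 < x + (upperRoot α β - β) := by linarith [le_upperRoot (β := β) hα]
  rw [← sub_eq_zero (b := α + β * x), sq_sub_eq_mul_sub_upperRoot (by positivity),
    mul_eq_zero_iff_left hpos.ne', sub_eq_zero]

theorem sqrt_eq_mul_two_mul_upperRoot_sub (a b : ℝ) {S : ℝ} (hS : 0 ≤ S) :
    √(b ^ 2 * S ^ 6 + 4 * a * S ^ 3) = S * (2 * upperRoot (a * S) (b * S ^ 2) - b * S ^ 2) := by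
  calc √(b ^ 2 * S ^ 6 + 4 * a * S ^ 3)
      = √(S ^ 2 * ((b * S ^ 2) ^ 2 + 4 * (a * S))) := by ring_nf
    _ = S * √((b * S ^ 2) ^ 2 + 4 * (a * S)) := by
      rw [Real.sqrt_mul (sq_nonneg S), Real.sqrt_sq hS]
    _ = S * (2 * upperRoot (a * S) (b * S ^ 2) - b * S ^ 2) := by
      unfold upperRoot
      ring

end UpperRoot

section CubeRoot

variable {x : ℝ}

theorem rpow_one_third_pow_three (hx : 0 ≤ x) : (x ^ ((1 : ℝ) / 3)) ^ 3 = x := by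
  simpa using Real.rpow_inv_natCast_pow hx three_ne_zero

theorem pow_three_rpow_one_third (hx : 0 ≤ x) : (x ^ 3) ^ ((1 : ℝ) / 3) = x := by
  simpa using Real.pow_rpow_inv_natCast hx three_ne_zero

theorem rpow_two_thirds_eq_sq (hx : 0 ≤ x) : x ^ ((2 : ℝ) / 3) = (x ^ ((1 : ℝ) / 3)) ^ 2 := by
  rw [← Real.rpow_mul_natCast hx]
  norm_num

end CubeRoot

section System

variable {α β t s : ℝ}

theorem upperRoot_le_rpow_add (hα : 0 ≤ α) (hts : 0 < t + s)
    (ht : α * (t + s) ^ ((1 : ℝ) / 3) ≤ t) (hs : β * (t + s) ^ ((2 : ℝ) / 3) ≤ s) :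
    upperRoot α β ≤ (t + s) ^ ((1 : ℝ) / 3) := by
  have hcube := rpow_one_third_pow_three hts.le
  have hpos : 0 < (t + s) ^ ((1 : ℝ) / 3) := by positivity
  rw [rpow_two_thirds_eq_sq hts.le] at hs
  set x := (t + s) ^ ((1 : ℝ) / 3)
  have hmul : x * (α + β * x) ≤ x * x ^ 2 := by linarith
  exact (upperRoot_le_iff hα hpos).2 (le_of_mul_le_mul_left hmul hpos)

theorem rpow_add_eq_upperRoot (hα : 0 ≤ α) (hts : 0 < t + s)
    (ht : t = α * (t + s) ^ ((1 : ℝ) / 3)) (hs : s = β * (t + s) ^ ((2 : ℝ) / 3)) :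
    (t + s) ^ ((1 : ℝ) / 3) = upperRoot α β := by
  have hcube := rpow_one_third_pow_three hts.le
  have hpos : 0 < (t + s) ^ ((1 : ℝ) / 3) := by positivity
  rw [rpow_two_thirds_eq_sq hts.le] at hs
  set x := (t + s) ^ ((1 : ℝ) / 3)
  have hmul : x * x ^ 2 = x * (α + β * x) := by linarith
  exact (eq_upperRoot_iff hα hpos).2 (mul_left_cancel₀ hpos.ne' hmul)

theorem system_iff_eq_upperRoot (hα : 0 ≤ α) (hts : 0 < t + s) :
    t = α * (t + s) ^ ((1 : ℝ) / 3) ∧ s = β * (t + s) ^ ((2 : ℝ) / 3) ↔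
      t = α * upperRoot α β ∧ s = β * upperRoot α β ^ 2 := by
  rw [rpow_two_thirds_eq_sq hts.le]
  constructor
  · rintro ⟨ht, hs⟩
    have hroot : (t + s) ^ ((1 : ℝ) / 3) = upperRoot α β :=
      rpow_add_eq_upperRoot hα hts ht (by rwa [rpow_two_thirds_eq_sq hts.le])
    rw [hroot] at ht hs
    exact ⟨ht, hs⟩
  · rintro ⟨ht, hs⟩
    have hcube : t + s = upperRoot α β ^ 3 := by
      rw [upperRoot_cube (by positivity), ← ht, ← hs]
    rw [hcube, pow_three_rpow_one_third (upperRoot_nonneg hα)]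
    exact ⟨ht, hs⟩

theorem upperRoot_bounds_of_system_le (hα : 0 ≤ α) (hβ : 0 ≤ β) (hts : 0 < t + s)
    (ht : α * (t + s) ^ ((1 : ℝ) / 3) ≤ t) (hs : β * (t + s) ^ ((2 : ℝ) / 3) ≤ s) :
    α * upperRoot α β ≤ t ∧ β * upperRoot α β ^ 2 ≤ s := by
  have hroot := upperRoot_le_rpow_add hα hts ht hs
  have hnonneg := upperRoot_nonneg (β := β) hα
  rw [rpow_two_thirds_eq_sq hts.le] at hs
  exact ⟨le_trans (by gcongr) ht, le_trans (by gcongr) hs⟩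

end System

/-- the system `t = aS(t+s)^{1/3}`, `s = bS²(t+s)^{2/3}` in positive reals
has a unique solution `(t₀, s₀)`, given explicitly, and any `t, s > 0` with
`t − aS(t+s)^{1/3} ≥ 0` and `s − bS²(t+s)^{2/3} ≥ 0` satisfy `t ≥ t₀`, `s ≥ s₀`. -/
theorem statement3 (a b S : ℝ) (ha : 0 < a) (hb : 0 < b) (hS : 0 < S) :
    ∃ t₀ s₀ : ℝ,
      t₀ = (a * b * S ^ 3 + a * Real.sqrt (b ^ 2 * S ^ 6 + 4 * a * S ^ 3)) / 2 ∧
      s₀ = a * b * S ^ 3 +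
        (b ^ 3 * S ^ 6 + b ^ 2 * S ^ 3 * Real.sqrt (b ^ 2 * S ^ 6 + 4 * a * S ^ 3)) / 2 ∧
      0 < t₀ ∧ 0 < s₀ ∧
      t₀ - a * S * (t₀ + s₀) ^ ((1 : ℝ) / 3) = 0 ∧
      s₀ - b * S ^ 2 * (t₀ + s₀) ^ ((2 : ℝ) / 3) = 0 ∧
      (∀ t s : ℝ, 0 < t → 0 < s →
        t - a * S * (t + s) ^ ((1 : ℝ) / 3) = 0 →
        s - b * S ^ 2 * (t + s) ^ ((2 : ℝ) / 3) = 0 → t = t₀ ∧ s = s₀) ∧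
      (∀ t s : ℝ, 0 < t → 0 < s →
        0 ≤ t - a * S * (t + s) ^ ((1 : ℝ) / 3) →
        0 ≤ s - b * S ^ 2 * (t + s) ^ ((2 : ℝ) / 3) → t₀ ≤ t ∧ s₀ ≤ s) := by
  have hα : 0 < a * S := by positivity
  have hβ : 0 < b * S ^ 2 := by positivity
  have hsqrt := sqrt_eq_mul_two_mul_upperRoot_sub a b hS.le
  have ht₀ : 0 < a * S * upperRoot (a * S) (b * S ^ 2) := mul_pos hα (upperRoot_pos hα)
  have hs₀ : 0 < b * S ^ 2 * upperRoot (a * S) (b * S ^ 2) ^ 2 :=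
    mul_pos hβ (pow_pos (upperRoot_pos hα) 2)
  obtain ⟨ht_eq, hs_eq⟩ := (system_iff_eq_upperRoot hα.le (add_pos ht₀ hs₀)).2 ⟨rfl, rfl⟩
  refine ⟨_, _, ?_, ?_, ht₀, hs₀, sub_eq_zero.2 ht_eq, sub_eq_zero.2 hs_eq, ?_, ?_⟩
  · rw [hsqrt]
    ring
  · rw [hsqrt, upperRoot_sq (by positivity)]
    ring
  · intro t s ht hs h_t h_s
    exact (system_iff_eq_upperRoot hα.le (add_pos ht hs)).1 ⟨sub_eq_zero.1 h_t, sub_eq_zero.1 h_s⟩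
  · intro t s ht hs h_t h_s
    exact upperRoot_bounds_of_system_le hα.le hβ.le (add_pos ht hs)
      (sub_nonneg.1 h_t) (sub_nonneg.1 h_s)

end
end

section
/- Let a,b,S>0 and suppose l>0 satisfies (al + bl²)^{1/3} ≤ l/S. Then l ≥ bS³/2 + √(b²S⁶/4 + aS³), and consequently (a/3)l + (b/12)l² ≥ abS³/4 + b³S⁶/24 + (4aS + b²S⁴)^{3/2}/24. -/
open Real

noncomputable section

/-!
Cubing the hypothesis and dividing by `l` gives the quadratic inequality `S³ (a + b l) ≤ l²`. The
roots of `t² - b S³ t - a S³` have product `-a S³ ≤ 0`, so a positive `l` satisfying it lies above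
the larger root `m`. Since `t ↦ (a/3) t + (b/12) t²` is nondecreasing on `[0, l]`, its value at `l`
is at least its value at `m`. The latter is computed by writing `m = (S/2) (b S² + r)` with
`r² = 4 a S + b² S⁴`.
-/

section Quadratic

lemma half_add_sqrt_nonneg (p : ℝ) {q : ℝ} (hq : 0 ≤ q) : 0 ≤ p / 2 + √(p ^ 2 / 4 + q) := by
  have h_abs : |p / 2| ≤ √(p ^ 2 / 4 + q) := abs_le_sqrt (by linarith [div_pow p 2 2])
  linarith [neg_abs_le (p / 2)]

lemma half_add_sqrt_le_of_mul_add_le_sq {p q x : ℝ} (hq : 0 ≤ q) (hx : 0 < x)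
    (h : p * x + q ≤ x ^ 2) : p / 2 + √(p ^ 2 / 4 + q) ≤ x := by
  have hpx : p ≤ x := le_of_mul_le_mul_right (by linarith) hx
  have h_sqrt : √(p ^ 2 / 4 + q) ≤ x - p / 2 := sqrt_le_iff.mpr ⟨by linarith, by linarith⟩
  linarith

lemma monotoneOn_mul_add_mul_sq {R : Type*} [CommRing R] [LinearOrder R] [IsStrictOrderedRing R]
    {c d t : R} (hc : 0 ≤ c) (ht : 0 ≤ c + 2 * d * t) :
    MonotoneOn (fun x ↦ c * x + d * x ^ 2) (Set.Icc 0 t) := by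
  rintro x ⟨hx, hxt⟩ y ⟨hy, hyt⟩ hxy
  have h_slope : 0 ≤ c + d * (x + y) := by
    rcases le_total 0 d with hd | hd
    · positivity
    · linarith [mul_le_mul_of_nonpos_left hxt hd, mul_le_mul_of_nonpos_left hyt hd]
  have h_diff : c * y + d * y ^ 2 - (c * x + d * x ^ 2) = (y - x) * (c + d * (x + y)) := by ring
  exact sub_nonneg.mp (h_diff ▸ mul_nonneg (sub_nonneg.mpr hxy) h_slope)

end Quadratic

section LargerRoot

variable {a b S l : ℝ}

lemma mul_add_le_sq_of_rpow_le_div (hS : 0 < S) (hl : 0 < l) (hab : 0 ≤ a + b * l)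
    (h : (a * l + b * l ^ 2) ^ ((1 : ℝ) / 3) ≤ l / S) :
    b * S ^ 3 * l + a * S ^ 3 ≤ l ^ 2 := by
  have h_nonneg : 0 ≤ a * l + b * l ^ 2 := by linarith [mul_nonneg hab hl.le]
  have h_cube : a * l + b * l ^ 2 ≤ (l / S) ^ 3 := by
    rwa [one_div, rpow_inv_le_iff_of_pos h_nonneg (by positivity) (by norm_num), rpow_ofNat] at h
  rw [div_pow, le_div_iff₀ (by positivity)] at h_cube
  exact le_of_mul_le_mul_right (by linarith) hl

lemma sqrt_quarter_discrim_eq (a b : ℝ) (hS : 0 ≤ S) :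
    √((b * S ^ 3) ^ 2 / 4 + a * S ^ 3) = S / 2 * √(4 * a * S + b ^ 2 * S ^ 4) := by
  rw [show (b * S ^ 3) ^ 2 / 4 + a * S ^ 3 = (S / 2) ^ 2 * (4 * a * S + b ^ 2 * S ^ 4) by ring,
    sqrt_mul (sq_nonneg _), sqrt_sq (by positivity)]

lemma value_at_larger_root_eq (b : ℝ) (ha : 0 ≤ a) (hS : 0 ≤ S) :
    a / 3 * (b * S ^ 3 / 2 + √((b * S ^ 3) ^ 2 / 4 + a * S ^ 3)) +
        b / 12 * (b * S ^ 3 / 2 + √((b * S ^ 3) ^ 2 / 4 + a * S ^ 3)) ^ 2 =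
      a * b * S ^ 3 / 4 + b ^ 3 * S ^ 6 / 24 +
        (4 * a * S + b ^ 2 * S ^ 4) ^ ((3 : ℝ) / 2) / 24 := by
  have h_nonneg : 0 ≤ 4 * a * S + b ^ 2 * S ^ 4 := by positivity
  rw [sqrt_quarter_discrim_eq a b hS, rpow_div_two_eq_sqrt 3 h_nonneg, rpow_ofNat]
  linear_combination
    (b * S ^ 2 / 48 - √(4 * a * S + b ^ 2 * S ^ 4) / 24) * sq_sqrt h_nonneg

theorem statement17_general (ha : 0 ≤ a) (hS : 0 < S) (hl : 0 < l) (hab : 0 ≤ a + b * l)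
    (h : (a * l + b * l ^ 2) ^ ((1 : ℝ) / 3) ≤ l / S) :
    b * S ^ 3 / 2 + √(b ^ 2 * S ^ 6 / 4 + a * S ^ 3) ≤ l ∧
    a * b * S ^ 3 / 4 + b ^ 3 * S ^ 6 / 24 +
        (4 * a * S + b ^ 2 * S ^ 4) ^ ((3 : ℝ) / 2) / 24 ≤
      a / 3 * l + b / 12 * l ^ 2 := by
  have hq : 0 ≤ a * S ^ 3 := by positivity
  have h_root_nonneg := half_add_sqrt_nonneg (b * S ^ 3) hq
  have h_root_le : b * S ^ 3 / 2 + √((b * S ^ 3) ^ 2 / 4 + a * S ^ 3) ≤ l :=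
    half_add_sqrt_le_of_mul_add_le_sq hq hl (mul_add_le_sq_of_rpow_le_div hS hl hab h)
  have h_mono : MonotoneOn (fun t ↦ a / 3 * t + b / 12 * t ^ 2) (Set.Icc 0 l) :=
    monotoneOn_mul_add_mul_sq (by positivity) (by linarith)
  constructor
  · rwa [show b ^ 2 * S ^ 6 = (b * S ^ 3) ^ 2 by ring]
  · rw [← value_at_larger_root_eq b ha hS.le]
    exact h_mono ⟨h_root_nonneg, h_root_le⟩ ⟨hl.le, le_rfl⟩ h_root_le

end LargerRoot

/-- if `l > 0` satisfies `(al + bl²)^{1/3} ≤ l/S`, then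
`l ≥ bS³/2 + √(b²S⁶/4 + aS³)` and consequently
`(a/3)l + (b/12)l² ≥ abS³/4 + b³S⁶/24 + (4aS + b²S⁴)^{3/2}/24`. -/
theorem statement17 (a b S l : ℝ) (ha : 0 < a) (hb : 0 < b) (hS : 0 < S) (hl : 0 < l)
    (h : (a * l + b * l ^ 2) ^ ((1 : ℝ) / 3) ≤ l / S) :
    b * S ^ 3 / 2 + Real.sqrt (b ^ 2 * S ^ 6 / 4 + a * S ^ 3) ≤ l ∧
    a * b * S ^ 3 / 4 + b ^ 3 * S ^ 6 / 24 +
        (4 * a * S + b ^ 2 * S ^ 4) ^ ((3 : ℝ) / 2) / 24 ≤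
      a / 3 * l + b / 12 * l ^ 2 :=
  statement17_general ha.le hS hl (by positivity) h

end
end
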